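/- With α = ln(1+√2), the integral ∫_{√2−1}^1 (ln t)/(1 − t²) dt equals α²/4 − π²/16. -/

import Mathlib

noncomputable def chiF (t : ℝ) : ℝ := ∑' k : ℕ, t ^ (2 * k + 1) / (2 * (k : ℝ) + 1) ^ 2

lemma chi_summable : Summable (fun k : ℕ => 1 / (2 * (k : ℝ) + 1) ^ 2) := by
  have h := hasSum_zeta_two.summable.comp_injective (i := fun k : ℕ => 2 * k + 1)
    (fun a b h => by simpa using h)
  refine h.congr fun k => ?_
  simp

lemma chi_one : chiF 1 = Real.pi ^ 2 / 8 := by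
  have h := hasSum_zeta_two
  have he : HasSum (fun k : ℕ => (1 : ℝ) / ((2 * k : ℕ) : ℝ) ^ 2) (Real.pi ^ 2 / 6 / 4) := by
    refine (h.div_const 4).congr_fun ?_
    intro k
    push_cast
    by_cases hk : (k : ℝ) = 0
    · simp [hk]
    · field_simp
      norm_num
  have ho := chi_summable.hasSum
  have h3 := HasSum.even_add_odd (f := fun n : ℕ => (1 : ℝ) / (n : ℝ) ^ 2) he
    (m' := ∑' k : ℕ, 1 / (2 * (k : ℝ) + 1) ^ 2) (by simpa using ho)
  have h4 := h3.unique h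
  unfold chiF
  simp only [one_pow]
  linarith

lemma chi_zero : chiF 0 = 0 := by
  unfold chiF
  simp

lemma chi_cont : ContinuousOn chiF (Set.Icc 0 1) := by
  unfold chiF
  refine continuousOn_tsum (fun k => by fun_prop) chi_summable ?_
  intro k x hx
  rw [Real.norm_eq_abs, abs_of_nonneg (by have := hx.1; positivity)]
  gcongr
  exact pow_le_one₀ hx.1 hx.2

lemma chi_deriv {x : ℝ} (hx : 0 < x) (hx1 : x < 1) :
    HasDerivAt chiF ((Real.log (1 + x) - Real.log (1 - x)) / (2 * x)) x := by
  obtain ⟨r, hr, hr1⟩ := exists_between hx1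
  have hr0 : 0 < r := hx.trans hr
  have hs : HasSum (fun k : ℕ => x ^ (2 * k) / (2 * (k : ℝ) + 1))
      ((Real.log (1 + x) - Real.log (1 - x)) / (2 * x)) := by
    have h := Real.hasSum_log_sub_log_of_abs_lt_one (x := x) (by rw [abs_of_pos hx]; exact hx1)
    refine (h.div_const (2 * x)).congr_fun ?_
    intro k
    field_simp
    try ring
  rw [← hs.tsum_eq]
  unfold chiF
  refine hasDerivAt_tsum_of_isPreconnected (t := Set.Ioo 0 r) (u := fun k : ℕ => (r ^ 2) ^ k)
    (y₀ := x)
    (g := fun (k : ℕ) (t : ℝ) => t ^ (2 * k + 1) / (2 * (k : ℝ) + 1) ^ 2)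
    (g' := fun (k : ℕ) (t : ℝ) => t ^ (2 * k) / (2 * (k : ℝ) + 1))
    (summable_geometric_of_lt_one (by positivity) (by nlinarith)) isOpen_Ioo isPreconnected_Ioo
    ?_ ?_ ⟨hx, hr⟩ ?_ ⟨hx, hr⟩
  · intro k y hy
    have h := (hasDerivAt_pow (2 * k + 1) y).div_const ((2 * (k : ℝ) + 1) ^ 2)
    refine h.congr_deriv ?_
    push_cast
    field_simp
  · intro k y hy
    have hy0 := hy.1
    rw [Real.norm_eq_abs, abs_of_nonneg (by positivity), ← pow_mul]
    calc y ^ (2 * k) / (2 * (k : ℝ) + 1) ≤ y ^ (2 * k) := by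
          apply div_le_self (by positivity)
          have : (0 : ℝ) ≤ k := by positivity
          linarith
      _ ≤ r ^ (2 * k) := by
          gcongr
          exact hy.2.le
  · refine Summable.of_nonneg_of_le (fun k => by positivity) (fun k => ?_) chi_summable
    gcongr
    exact pow_le_one₀ hx.le hx1.le

lemma mob_deriv {t : ℝ} (ht : 0 < t) (ht1 : t < 1) :
    HasDerivAt (fun t => chiF ((1 - t) / (1 + t))) (Real.log t / (1 - t ^ 2)) t := by
  have h1 : (1 + t) ≠ 0 := by positivity
  have h2 : (1 - t) ≠ 0 := by linarith
  have h3 : (1 - t ^ 2) ≠ 0 := by nlinarith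
  have hs0 : 0 < (1 - t) / (1 + t) := div_pos (by linarith) (by linarith)
  have hs1 : (1 - t) / (1 + t) < 1 := by
    rw [div_lt_one (by linarith)]; linarith
  have hm : HasDerivAt (fun t : ℝ => (1 - t) / (1 + t)) (-2 / (1 + t) ^ 2) t := by
    have := ((hasDerivAt_id t).const_sub 1).div ((hasDerivAt_id t).const_add 1) h1
    refine this.congr_deriv ?_
    simp only [id]
    ring
  have h := (chi_deriv hs0 hs1).comp t hm
  refine h.congr_deriv ?_
  have e1 : 1 + (1 - t) / (1 + t) = 2 / (1 + t) := by field_simp; ring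
  have e2 : 1 - (1 - t) / (1 + t) = 2 * t / (1 + t) := by field_simp; ring
  rw [e1, e2, Real.log_div (by norm_num) h1, Real.log_div (by positivity) h1,
    Real.log_mul (by norm_num) ht.ne']
  have h4 : (1 - t ^ 2) = (1 - t) * (1 + t) := by ring
  rw [h4]
  field_simp
  ring

lemma mob_cont : ContinuousOn (fun t => chiF ((1 - t) / (1 + t))) (Set.Icc 0 1) := by
  refine chi_cont.comp (t := Set.Icc 0 1) (f := fun t : ℝ => (1 - t) / (1 + t)) ?_ ?_
  · refine ContinuousOn.div (by fun_prop) (by fun_prop) ?_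
    intro x hx
    have := hx.1
    positivity
  · intro x hx
    have h0 := hx.1
    have h1 := hx.2
    refine ⟨div_nonneg (by linarith) (by linarith), ?_⟩
    rw [div_le_one (by linarith)]; linarith

lemma M_deriv {t : ℝ} (ht : -1 < t) (ht1 : t < 1) :
    HasDerivAt (fun t => Real.log (1 - t) - Real.log (1 + t)) (-2 / (1 - t ^ 2)) t := by
  have h1 : (1 + t) ≠ 0 := by linarith
  have h2 : (1 - t) ≠ 0 := by linarith
  have h3 : (1 - t ^ 2) ≠ 0 := by nlinarith
  have := (((hasDerivAt_id t).const_sub 1).log h2).sub (((hasDerivAt_id t).const_add 1).log h1)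
  refine this.congr_deriv ?_
  simp only [id]
  have h4 : (1 - t ^ 2) = (1 - t) * (1 + t) := by ring
  rw [h4]
  field_simp
  ring

lemma prod_cont : ContinuousOn
    (fun t => Real.log t * (Real.log (1 - t) - Real.log (1 + t))) (Set.Ioo (-1) 1) := by
  have hd : ContinuousOn (dslope (fun t => Real.log (1 - t) - Real.log (1 + t)) 0)
      (Set.Ioo (-1 : ℝ) 1) := by
    rw [continuousOn_dslope (Ioo_mem_nhds (by norm_num) (by norm_num))]
    exact ⟨fun t ht => (M_deriv ht.1 ht.2).continuousAt.continuousWithinAt,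
      (M_deriv (by norm_num) (by norm_num)).differentiableAt⟩
  refine (Real.continuous_mul_log.continuousOn.mul hd).congr ?_
  intro t _
  by_cases h : t = 0
  · simp [h]
  · simp only [Pi.mul_apply]
    rw [dslope_of_ne _ h, slope_def_field]
    simp
    field_simp

lemma chi_fixed (a : ℝ) (ha : 0 < a) (ha1 : a < 1) :
    chiF a + chiF ((1 - a) / (1 + a)) +
      Real.log a * (Real.log (1 - a) - Real.log (1 + a)) / 2 = Real.pi ^ 2 / 8 := by
  obtain ⟨c, hc, h⟩ := exists_hasDerivAt_eq_slope
    (fun t => chiF t + chiF ((1 - t) / (1 + t)) +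
      Real.log t * (Real.log (1 - t) - Real.log (1 + t)) / 2) (fun _ => 0) ha
    (((chi_cont.mono (Set.Icc_subset_Icc_right ha1.le)).add
      (mob_cont.mono (Set.Icc_subset_Icc_right ha1.le))).add
      ((prod_cont.mono (fun x hx => ⟨by linarith [hx.1], by linarith [hx.2]⟩)).div_const 2))
    (by
      intro x hx
      have h0 := hx.1
      have h1 : x < 1 := hx.2.trans ha1
      have := ((chi_deriv h0 h1).add (mob_deriv h0 h1)).add
        (((Real.hasDerivAt_log h0.ne').mul (M_deriv (by linarith) h1)).div_const 2)
      refine this.congr_deriv ?_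
      have h3 : (1 - x ^ 2) ≠ 0 := by nlinarith
      field_simp
      ring)
  rw [eq_div_iff (by linarith), zero_mul] at h
  simp only [sub_zero, add_zero, div_one, chi_zero, chi_one, Real.log_zero, zero_mul,
    zero_div, zero_add] at h
  linarith

/-- With α = ln(1+√2), ∫_{√2−1}^1 (ln t)/(1 − t²) dt = α²/4 − π²/16. -/
theorem integral_log_div_one_sub_sq :
    (∫ t in (Real.sqrt 2 - 1)..1, Real.log t / (1 - t ^ 2)) =
      Real.log (1 + Real.sqrt 2) ^ 2 / 4 - Real.pi ^ 2 / 16 := by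
  have hsq : Real.sqrt 2 ^ 2 = 2 := Real.sq_sqrt (by norm_num)
  have hs0 : 0 ≤ Real.sqrt 2 := Real.sqrt_nonneg 2
  have ha : 0 < Real.sqrt 2 - 1 := by nlinarith
  have ha1 : Real.sqrt 2 - 1 < 1 := by nlinarith
  have hfix : (1 - (Real.sqrt 2 - 1)) / (1 + (Real.sqrt 2 - 1)) = Real.sqrt 2 - 1 := by
    rw [div_eq_iff (by linarith)]; nlinarith
  have hc := mob_cont.mono (Set.Icc_subset_Icc_left (b := 1) ha.le)
  have hder : ∀ x ∈ Set.Ioo (Real.sqrt 2 - 1) 1,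
      HasDerivAt (fun t => chiF ((1 - t) / (1 + t))) (Real.log x / (1 - x ^ 2)) x :=
    fun x hx => mob_deriv (ha.trans hx.1) hx.2
  have hint : IntervalIntegrable (fun t => Real.log t / (1 - t ^ 2)) MeasureTheory.volume
      (Real.sqrt 2 - 1) 1 := by
    have := intervalIntegral.intervalIntegrable_deriv_of_nonneg
      (g := fun t => -chiF ((1 - t) / (1 + t))) (g' := fun t => -(Real.log t / (1 - t ^ 2)))
      (a := Real.sqrt 2 - 1) (b := 1)
      (by rw [Set.uIcc_of_le ha1.le]; exact hc.neg)
      (by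
        rw [min_eq_left ha1.le, max_eq_right ha1.le]
        exact fun x hx => (hder x hx).neg)
      (by
        rw [min_eq_left ha1.le, max_eq_right ha1.le]
        intro x hx
        have h0 := ha.trans hx.1
        have h1 := hx.2
        have := div_nonpos_of_nonpos_of_nonneg (Real.log_nonpos h0.le h1.le)
          (show 0 ≤ 1 - x ^ 2 by nlinarith)
        simpa using this)
    have h2 := this.neg
    refine h2.congr (fun x _ => ?_)
    simp
  rw [intervalIntegral.integral_eq_sub_of_hasDerivAt_of_le ha1.le hc hder hint]
  have hk := chi_fixed _ ha ha1
  have hM : Real.log (1 - (Real.sqrt 2 - 1)) - Real.log (1 + (Real.sqrt 2 - 1))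
      = Real.log (Real.sqrt 2 - 1) := by
    rw [← Real.log_div (by linarith) (by linarith), hfix]
  have hL : Real.log (Real.sqrt 2 - 1) = - Real.log (1 + Real.sqrt 2) := by
    rw [← Real.log_inv]
    congr 1
    refine eq_inv_of_mul_eq_one_left ?_
    nlinarith
  rw [hM, hfix, hL] at hk
  simp only [hfix, sub_self, zero_div, chi_zero]
  linarith
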